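/- Let d ≥ 1 and D ≥ 3 be integers and let A = {0} ∪ {εᵢ : 1 ≤ i ≤ d} ∪ {(D−1)εᵢ : 1 ≤ i ≤ d} ∪ {εᵢ + (D−1)ε_j : 1 ≤ i, j ≤ d} ⊆ ℕ^d. Then the sumsets regularity of A equals σ(A) = d(D−2). -/

import Mathlib

open Pointwise

/-- The `s`-fold sumset of `A`: `0A = {0}` and `(s+1)A = A + sA`. -/
def sumset {M : Type*} [AddMonoid M] (A : Set M) : ℕ → Set M
  | 0 => {0}
  | s + 1 => A + sumset A s

/-- The discrete simplex `Δ_s = {y ∈ ℕ^d : |y| ≤ sD}`. -/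
def Delta (d D s : ℕ) : Set (Fin d → ℕ) := {y | ∑ j, y j ≤ s * D}

/-- The set `{0, Dε₁, …, Dε_d}`. -/
def Erays (d D : ℕ) : Set (Fin d → ℕ) :=
  insert 0 (Set.range fun i : Fin d => Pi.single i D)

/-!
The set is the Minkowski sum `A = {0, ε₁, …, ε_d} + {0, mε₁, …, mε_d}` with `m = D - 1`, so
`sA` consists of the vectors `u + m • v` with `|u|, |v| ≤ s`. A vector `y` of `Δ_s` decomposes in
this way by putting into `v` as much as possible of the quotients `y_j / m`: either `v` reaches
weight `s`, or `u` consists of the remainders `y_j % m`, whose sum is at most `d(m - 1)`.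
Conversely, if `0 < s < d(m - 1)`, a vector of weight `s + 1` with all coordinates below `m` lies in
`Δ_s` and forces `v = 0`, so it is missed by `sA`. The condition `Δ_s + {0, Dε_i} = Δ_{s+1}`
amounts, by pigeonhole, to `d(D - 1) ≤ sD`.
-/

theorem sumset_eq_nsmul {M : Type*} [AddMonoid M] (A : Set M) (s : ℕ) : sumset A s = s • A := by
  induction s with
  | zero => rw [zero_nsmul]; rfl
  | succ s ih => rw [succ_nsmul', ← ih]; rfl

section Sums

variable {ι : Type*} [Fintype ι]

theorem exists_le_sum_eq {w : ι → ℕ} {k : ℕ} (hk : k ≤ ∑ j, w j) :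
    ∃ v ≤ w, ∑ j, v j = k := by
  classical
  induction k with
  | zero => exact ⟨0, zero_le, by simp⟩
  | succ k ih =>
    obtain ⟨v, hvw, hv⟩ := ih (by omega)
    obtain ⟨i, -, hi⟩ := Finset.exists_lt_of_sum_lt (show ∑ j, v j < ∑ j, w j by omega)
    refine ⟨v + Pi.single i 1, fun j => ?_, by simp [Finset.sum_add_distrib, hv]⟩
    rcases eq_or_ne j i with rfl | hj
    · simpa using hi
    · simpa [hj] using hvw j

theorem sum_add_nsmul (u v : ι → ℕ) (m : ℕ) :
    ∑ j, (u + m • v) j = ∑ j, u j + m * ∑ j, v j := by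
  simp [Finset.sum_add_distrib, Finset.mul_sum]

theorem sum_le_mul_sum_div_add {m : ℕ} (hm : 0 < m) (y : ι → ℕ) :
    ∑ j, y j ≤ m * ∑ j, y j / m + Fintype.card ι * (m - 1) := by
  calc ∑ j, y j = ∑ j, (m * (y j / m) + y j % m) := by simp only [Nat.div_add_mod]
    _ ≤ ∑ j, (m * (y j / m) + (m - 1)) :=
        Finset.sum_le_sum fun j _ => Nat.add_le_add_left (Nat.le_pred_of_lt (Nat.mod_lt _ hm)) _
    _ = m * ∑ j, y j / m + Fintype.card ι * (m - 1) := by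
        simp [Finset.sum_add_distrib, Finset.mul_sum]

end Sums

section Simplices

variable {d D k m s : ℕ} {x y : Fin d → ℕ}

theorem mem_Delta : y ∈ Delta d D s ↔ ∑ j, y j ≤ s * D := Iff.rfl

theorem sum_le_of_mem_Erays (hx : x ∈ Erays d D) : ∑ j, x j ≤ D := by
  rcases hx with rfl | ⟨i, rfl⟩ <;> simp

theorem apply_eq_zero_or_le_of_mem_Erays (hx : x ∈ Erays d D) (j : Fin d) :
    x j = 0 ∨ D ≤ x j := by
  rcases hx with rfl | ⟨i, rfl⟩
  · simp
  · rcases eq_or_ne j i with rfl | hj <;> simp [*]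

theorem Delta_add_Erays_subset : Delta d D s + Erays d D ⊆ Delta d D (s + 1) := by
  rintro _ ⟨y, hy, x, hx, rfl⟩
  have hy := mem_Delta.1 hy
  have hx := sum_le_of_mem_Erays hx
  simp only [mem_Delta, Pi.add_apply, Finset.sum_add_distrib]
  linarith

theorem Delta_succ_subset_add_Erays (h : d * (D - 1) ≤ s * D) :
    Delta d D (s + 1) ⊆ Delta d D s + Erays d D := by
  intro y hy
  by_cases hys : y ∈ Delta d D s
  · exact ⟨y, hys, 0, Or.inl rfl, add_zero y⟩
  obtain ⟨i, -, hi⟩ : ∃ i ∈ Finset.univ, D - 1 < y i :=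
    Finset.exists_lt_of_sum_lt (f := fun _ => D - 1) (by simpa using h.trans_lt (not_le.1 hys))
  have hle : Pi.single i D ≤ y := fun j => by
    rcases eq_or_ne j i with rfl | hj
    · rw [Pi.single_eq_same]; exact Nat.le_of_pred_lt hi
    · simp [hj]
  refine ⟨y - Pi.single i D, ?_, _, Or.inr ⟨i, rfl⟩, tsub_add_cancel_of_le hle⟩
  have hsum : ∑ j, (y - Pi.single i D + Pi.single i D : Fin d → ℕ) j ≤ (s + 1) * D := by
    rwa [tsub_add_cancel_of_le hle]
  simp only [Pi.add_apply, Finset.sum_add_distrib, Fintype.sum_pi_single'] at hsum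
  rw [mem_Delta]
  linarith

theorem Delta_add_Erays_eq_iff (hD : 0 < D) :
    Delta d D s + Erays d D = Delta d D (s + 1) ↔ d * (D - 1) ≤ s * D := by
  refine ⟨fun heq => ?_,
    fun h => Delta_add_Erays_subset.antisymm (Delta_succ_subset_add_Erays h)⟩
  by_contra! hlt
  obtain ⟨y, hyD, hy⟩ := exists_le_sum_eq (w := fun _ : Fin d => D - 1) (k := s * D + 1) (by simpa)
  have hmem : y ∈ Delta d D (s + 1) := by rw [mem_Delta]; linarith
  rw [← heq] at hmem
  obtain ⟨z, hz, x, hx, rfl⟩ := hmem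
  have hx0 : x = 0 := by
    ext j
    have hxj : x j = 0 ∨ D ≤ x j := apply_eq_zero_or_le_of_mem_Erays hx j
    have hzx : z j + x j ≤ D - 1 := hyD j
    rw [Pi.zero_apply]
    omega
  subst hx0
  have hz := mem_Delta.1 hz
  simp only [add_zero] at hy
  omega

theorem nsmul_Erays_one (d s : ℕ) : s • Erays d 1 = Delta d 1 s := by
  induction s with
  | zero => ext y; simp [mem_Delta, funext_iff]
  | succ s ih => rw [succ_nsmul, ih, (Delta_add_Erays_eq_iff one_pos).2 (by simp)]

theorem image_nsmul_Erays (d m D : ℕ) :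
    nsmulAddMonoidHom m '' Erays d D = Erays d (m * D) := by
  have hsingle (i : Fin d) : m • (Pi.single i D : Fin d → ℕ) = Pi.single i (m * D) := by
    rw [← Pi.single_smul, smul_eq_mul]
  simp only [Erays, Set.image_insert_eq, ← Set.range_comp, Function.comp_def,
    nsmulAddMonoidHom_apply, nsmul_zero, hsingle]

theorem nsmul_Erays (d m s : ℕ) : s • Erays d m = nsmulAddMonoidHom m '' Delta d 1 s := by
  rw [← nsmul_Erays_one, Set.image_nsmul, image_nsmul_Erays, mul_one]

theorem mem_sumset_Erays_add_Erays :
    y ∈ sumset (Erays d k + Erays d m) s ↔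
      ∃ u ∈ Delta d 1 s, ∃ v ∈ Delta d 1 s, k • u + m • v = y := by
  rw [sumset_eq_nsmul, nsmul_add, nsmul_Erays, nsmul_Erays]
  simp only [Set.mem_add, Set.exists_mem_image, nsmulAddMonoidHom_apply]

theorem sumset_Erays_add_Erays_subset :
    sumset (Erays d k + Erays d m) s ⊆ Delta d (k + m) s := by
  intro y hy
  obtain ⟨u, hu, v, hv, rfl⟩ := mem_sumset_Erays_add_Erays.1 hy
  rw [mem_Delta, mul_one] at hu hv
  calc ∑ j, (k • u + m • v) j = k * ∑ j, u j + m * ∑ j, v j := by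
        simp [Finset.sum_add_distrib, Finset.mul_sum]
    _ ≤ k * s + m * s := by gcongr
    _ = s * (k + m) := by ring

theorem Delta_subset_sumset_Erays_add_Erays (hm : 0 < m) (h : d * (m - 1) ≤ s) :
    Delta d (1 + m) s ⊆ sumset (Erays d 1 + Erays d m) s := by
  intro y hy
  obtain ⟨v, hvy, hv⟩ := exists_le_sum_eq (min_le_right s (∑ j, y j / m))
  have hle : m • v ≤ y := fun j =>
    (Nat.mul_le_mul_left m (hvy j)).trans (Nat.mul_div_le (y j) m)
  have hsum : ∑ j, y j = ∑ j, (y - m • v) j + m * ∑ j, v j := by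
    rw [← sum_add_nsmul, tsub_add_cancel_of_le hle]
  refine mem_sumset_Erays_add_Erays.2 ⟨y - m • v, ?_, v, ?_, ?_⟩
  · rw [mem_Delta] at hy ⊢
    rcases min_choice s (∑ j, y j / m) with hmin | hmin <;> rw [hv, hmin] at hsum
    · linarith
    · have hrem := sum_le_mul_sum_div_add hm y
      rw [Fintype.card_fin] at hrem
      linarith
  · rw [mem_Delta, hv, mul_one]
    exact min_le_left _ _
  · rw [one_nsmul, tsub_add_cancel_of_le hle]

theorem sumset_Erays_one_add_Erays_eq_Delta_iff (hm : 0 < m) (hs : 0 < s) :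
    sumset (Erays d 1 + Erays d m) s = Delta d (1 + m) s ↔ d * (m - 1) ≤ s := by
  refine ⟨fun heq => ?_,
    fun h => sumset_Erays_add_Erays_subset.antisymm (Delta_subset_sumset_Erays_add_Erays hm h)⟩
  by_contra! hlt
  obtain ⟨y, hym, hy⟩ := exists_le_sum_eq (w := fun _ : Fin d => m - 1) (k := s + 1) (by simpa)
  have hmem : y ∈ Delta d (1 + m) s := by
    rw [mem_Delta, hy, mul_one_add]
    exact Nat.add_le_add_left (Nat.mul_pos hs hm) s
  rw [← heq] at hmem
  obtain ⟨u, hu, v, -, rfl⟩ := mem_sumset_Erays_add_Erays.1 hmem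
  have hv0 (j : Fin d) : v j = 0 := by
    have hj : 1 * u j + m * v j ≤ m - 1 := hym j
    exact Nat.lt_one_iff.1 (Nat.lt_of_mul_lt_mul_left (a := m) (by omega))
  rw [mem_Delta] at hu
  simp only [one_nsmul, sum_add_nsmul, hv0, Finset.sum_const_zero] at hy
  omega

theorem Erays_add_Erays (d k m : ℕ) :
    Erays d k + Erays d m = {x : Fin d → ℕ | x = 0 ∨ (∃ i : Fin d, x = Pi.single i k) ∨
      (∃ i : Fin d, x = Pi.single i m) ∨
      (∃ i j : Fin d, x = Pi.single i k + Pi.single j m)} := by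
  ext x
  simp [Erays, Set.mem_add, exists_or, eq_comm, or_assoc, or_left_comm]

end Simplices

theorem stmt_6 (d D : ℕ) (hd : 1 ≤ d) (hD : 3 ≤ D)
    (A : Set (Fin d → ℕ))
    (hA : A = {x : Fin d → ℕ | x = 0 ∨ (∃ i : Fin d, x = Pi.single i 1) ∨
      (∃ i : Fin d, x = Pi.single i (D - 1)) ∨
      (∃ i j : Fin d, x = Pi.single i 1 + Pi.single j (D - 1))}) :
    IsLeast {s : ℕ | sumset A s = Delta d D s ∧
      Delta d D s + Erays d D = Delta d D (s + 1)} (d * (D - 2)) := by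
  obtain ⟨m, rfl⟩ : ∃ m, D = 1 + m := ⟨D - 1, by omega⟩
  rw [Nat.add_sub_cancel_left, ← Erays_add_Erays] at hA
  rw [hA, show 1 + m - 2 = m - 1 by omega]
  have hm : 0 < m := by omega
  have hpos : 0 < d * (m - 1) := Nat.mul_pos hd (by omega)
  have hrays_iff (s : ℕ) : Delta d (1 + m) s + Erays d (1 + m) = Delta d (1 + m) (s + 1) ↔
      d * m ≤ s * (1 + m) := by
    rw [Delta_add_Erays_eq_iff (by omega), Nat.add_sub_cancel_left]
  refine ⟨⟨(sumset_Erays_one_add_Erays_eq_Delta_iff hm hpos).2 le_rfl, (hrays_iff _).2 ?_⟩, ?_⟩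
  · exact Nat.mul_le_mul (Nat.le_mul_of_pos_right d (by omega)) (Nat.le_add_left m 1)
  · rintro s ⟨hsumset, hrays⟩
    have hs : 0 < s :=
      Nat.pos_of_mul_pos_right ((Nat.mul_pos hd hm).trans_le ((hrays_iff s).1 hrays))
    exact (sumset_Erays_one_add_Erays_eq_Delta_iff hm hs).1 hsumset
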